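/- arXiv:2211.08792 — 12 statements merged into one kernel-verified Lean document; each statement's English description precedes it below -/
import Mathlib

section
/- Consider a 2×2 zero-sum game with payoff matrix entries u11, u12, u21, u22. If (p*, q*) ∈ [0,1]×[0,1] is a Nash equilibrium and either (p* ∈ {0,1} and q* ∈ (0,1)) or (p* ∈ (0,1) and q* ∈ {0,1}), then the set of Nash equilibria of the game is infinite. -/
/-- Expected payoff of the 2×2 zero-sum game with payoff matrix entries
`u11, u12, u21, u22`, when Player 1 plays its first action with probability `p`
and Player 2 plays its first action with probability `q`. -/
noncomputable def payoff (u11 u12 u21 u22 p q : ℝ) : ℝ :=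
  u11 * p * q + u12 * p * (1 - q) + u21 * (1 - p) * q + u22 * (1 - p) * (1 - q)

/-- `(p, q)` is a Nash equilibrium of the 2×2 zero-sum game. -/
def IsNE (u11 u12 u21 u22 p q : ℝ) : Prop :=
  p ∈ Set.Icc (0 : ℝ) 1 ∧ q ∈ Set.Icc (0 : ℝ) 1 ∧
    (∀ p' ∈ Set.Icc (0 : ℝ) 1, payoff u11 u12 u21 u22 p' q ≤ payoff u11 u12 u21 u22 p q) ∧
    (∀ q' ∈ Set.Icc (0 : ℝ) 1, payoff u11 u12 u21 u22 p q ≤ payoff u11 u12 u21 u22 p q')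

/-- A segment of equilibria gives infinitely many equilibria. -/
lemma inf_of_seg (u11 u12 u21 u22 p a b : ℝ) (hab : a < b)
    (h : ∀ q ∈ Set.Icc a b, IsNE u11 u12 u21 u22 p q) :
    Set.Infinite {pq : ℝ × ℝ | IsNE u11 u12 u21 u22 pq.1 pq.2} := by
  have h1 : ((fun q : ℝ => (p, q)) '' Set.Icc a b).Infinite := by
    apply (Set.Icc_infinite hab).image
    intro x _ y _ hxy
    exact (Prod.mk.inj hxy).2
  apply h1.mono
  rintro _ ⟨q, hq, rfl⟩
  exact h q hq

/-- Equilibrium when the opponent is indifferent and the gap has the right sign. -/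
lemma ne_of_gap (u11 u12 u21 u22 p q : ℝ) (hp : p ∈ Set.Icc (0 : ℝ) 1)
    (hq : q ∈ Set.Icc (0 : ℝ) 1)
    (hE : (u11 - u12) * p + (u21 - u22) * (1 - p) = 0)
    (hD : ∀ p' ∈ Set.Icc (0 : ℝ) 1,
      0 ≤ (p - p') * ((u11 - u21) * q + (u12 - u22) * (1 - q))) :
    IsNE u11 u12 u21 u22 p q := by
  refine ⟨hp, hq, fun p' hp' => ?_, fun q' _ => ?_⟩
  · have := hD p' hp'
    unfold payoff
    linarith
  · unfold payoff
    apply le_of_eq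
    linear_combination (q - q') * hE

lemma case_one (u11 u12 u21 u22 p q : ℝ)
    (hNE : IsNE u11 u12 u21 u22 p q)
    (hp : p ∈ ({0, 1} : Set ℝ)) (hq : q ∈ Set.Ioo (0 : ℝ) 1) :
    Set.Infinite {pq : ℝ × ℝ | IsNE u11 u12 u21 u22 pq.1 pq.2} := by
  obtain ⟨hpI, hqI, h1, h2⟩ := hNE
  obtain ⟨hq0, hq1⟩ := hq
  have hE : (u11 - u12) * p + (u21 - u22) * (1 - p) = 0 := by
    have a := h2 0 (by simp)
    have b := h2 1 (by simp)
    unfold payoff at a b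
    apply le_antisymm
    · by_contra hc
      push Not at hc
      have := mul_pos hq0 hc
      linarith
    · by_contra hc
      push Not at hc
      have := mul_pos (sub_pos.2 hq1) (neg_pos.2 hc)
      linarith
  have key : ∀ p' ∈ Set.Icc (0 : ℝ) 1,
      0 ≤ (p - p') * ((u11 - u21) * q + (u12 - u22) * (1 - q)) := by
    intro p' hp'
    have := h1 p' hp'
    unfold payoff at this
    linarith
  set d := (u11 - u21) - (u12 - u22) with hd
  have step : ∀ q' ∈ Set.Icc (0 : ℝ) 1,
      (∀ p' ∈ Set.Icc (0 : ℝ) 1, 0 ≤ (p - p') * (d * (q' - q))) →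
      IsNE u11 u12 u21 u22 p q' := by
    intro q' hq' h
    apply ne_of_gap _ _ _ _ _ _ hpI hq' hE
    intro p' hp'
    have a := key p' hp'
    have b := h p' hp'
    rw [hd] at b
    linarith
  simp only [Set.mem_insert_iff, Set.mem_singleton_iff] at hp
  rcases hp with rfl | rfl <;> rcases le_total 0 d with h0 | h0
  · refine inf_of_seg _ _ _ _ _ 0 q hq0 fun q' hq' => step q' ⟨hq'.1, by linarith [hq'.2]⟩ ?_
    intro p' hp'
    exact mul_nonneg_of_nonpos_of_nonpos (by linarith [hp'.1])
      (mul_nonpos_of_nonneg_of_nonpos h0 (by linarith [hq'.2]))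
  · refine inf_of_seg _ _ _ _ _ q 1 hq1 fun q' hq' => step q' ⟨by linarith [hq'.1], hq'.2⟩ ?_
    intro p' hp'
    exact mul_nonneg_of_nonpos_of_nonpos (by linarith [hp'.1])
      (mul_nonpos_of_nonpos_of_nonneg h0 (by linarith [hq'.1]))
  · refine inf_of_seg _ _ _ _ _ q 1 hq1 fun q' hq' => step q' ⟨by linarith [hq'.1], hq'.2⟩ ?_
    intro p' hp'
    exact mul_nonneg (by linarith [hp'.2]) (mul_nonneg h0 (by linarith [hq'.1]))
  · refine inf_of_seg _ _ _ _ _ 0 q hq0 fun q' hq' => step q' ⟨hq'.1, by linarith [hq'.2]⟩ ?_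
    intro p' hp'
    exact mul_nonneg (by linarith [hp'.2])
      (mul_nonneg_of_nonpos_of_nonpos h0 (by linarith [hq'.2]))

/-- Swapping the players. -/
lemma ne_swap (u11 u12 u21 u22 p q : ℝ) (h : IsNE u11 u12 u21 u22 p q) :
    IsNE (-u11) (-u21) (-u12) (-u22) q p := by
  obtain ⟨hp, hq, h1, h2⟩ := h
  refine ⟨hq, hp, fun x hx => ?_, fun x hx => ?_⟩
  · have := h2 x hx
    unfold payoff at *
    linarith
  · have := h1 x hx
    unfold payoff at *
    linarith

theorem stmt0 (u11 u12 u21 u22 p q : ℝ)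
    (hNE : IsNE u11 u12 u21 u22 p q)
    (h : (p ∈ ({0, 1} : Set ℝ) ∧ q ∈ Set.Ioo (0 : ℝ) 1) ∨
         (p ∈ Set.Ioo (0 : ℝ) 1 ∧ q ∈ ({0, 1} : Set ℝ))) :
    Set.Infinite {pq : ℝ × ℝ | IsNE u11 u12 u21 u22 pq.1 pq.2} := by
  rcases h with ⟨hp, hq⟩ | ⟨hp, hq⟩
  · exact case_one _ _ _ _ _ _ hNE hp hq
  · have h1 := case_one _ _ _ _ _ _ (ne_swap _ _ _ _ _ _ hNE) hq hp
    have h2 := h1.image (f := Prod.swap) Prod.swap_injective.injOn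
    apply h2.mono
    rintro _ ⟨⟨x, y⟩, hxy, rfl⟩
    have := ne_swap _ _ _ _ _ _ hxy
    simpa using this
end

section
/- Consider a 2×2 zero-sum game with payoff matrix entries u11, u12, u21, u22, and let S ⊆ [0,1]×[0,1] be its set of Nash equilibria. Assume S is finite. Then: (1) if S contains a pair (p*, q*) with p* ∈ {0,1} and q* ∈ {0,1}, then S contains no pair (p, q) with p ∈ (0,1) and q ∈ (0,1); and (2) if S contains a pair (p*, q*) with p* ∈ (0,1) and q* ∈ (0,1), then S contains no pair (p, q) with p ∈ {0,1} and q ∈ {0,1}. -/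
theorem key (u11 u12 u21 u22 : ℝ)
    (hfin : Set.Finite {pq : ℝ × ℝ | IsNE u11 u12 u21 u22 pq.1 pq.2})
    (a b p q : ℝ) (h1 : IsNE u11 u12 u21 u22 a b) (h2 : IsNE u11 u12 u21 u22 p q) :
    a = p := by
  by_contra hne
  obtain ⟨ha, hb, hab1, hab2⟩ := h1
  obtain ⟨hp, hq, hpq1, hpq2⟩ := h2
  have e1 := hab2 q hq
  have e2 := hpq1 a ha
  have e3 := hpq2 b hb
  have e4 := hab1 p hp
  have aff : ∀ t y : ℝ, payoff u11 u12 u21 u22 (a + t * (p - a)) y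
      = (1 - t) * payoff u11 u12 u21 u22 a y + t * payoff u11 u12 u21 u22 p y := by
    intro t y
    unfold payoff
    ring
  have eq1 : payoff u11 u12 u21 u22 a q = payoff u11 u12 u21 u22 p q := by linarith
  have eq2 : payoff u11 u12 u21 u22 a b = payoff u11 u12 u21 u22 p q := by linarith
  have hinj : Set.InjOn (fun t : ℝ => ((a + t * (p - a), q) : ℝ × ℝ)) (Set.Icc 0 1) := by
    intro s _ t _ hst
    have h := congrArg Prod.fst hst
    have h' : s * (p - a) = t * (p - a) := by simpa using h
    exact mul_right_cancel₀ (sub_ne_zero.mpr (Ne.symm hne)) h'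
  refine (Set.infinite_of_injOn_mapsTo hinj ?_ (Set.Icc_infinite zero_lt_one)) hfin
  rintro t ⟨ht0, ht1⟩
  have ht1' : 0 ≤ 1 - t := by linarith
  have hr : payoff u11 u12 u21 u22 (a + t * (p - a)) q = payoff u11 u12 u21 u22 p q := by
    rw [aff, eq1]
    ring
  refine ⟨⟨?_, ?_⟩, hq, ?_, ?_⟩
  · change 0 ≤ a + t * (p - a)
    nlinarith [mul_nonneg ht1' ha.1, mul_nonneg ht0 hp.1]
  · change a + t * (p - a) ≤ 1
    nlinarith [mul_le_mul_of_nonneg_left ha.2 ht1', mul_le_mul_of_nonneg_left hp.2 ht0]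
  · intro p' hp'
    change _ ≤ payoff u11 u12 u21 u22 (a + t * (p - a)) q
    rw [hr]
    exact hpq1 p' hp'
  · intro q' hq'
    change payoff u11 u12 u21 u22 (a + t * (p - a)) q ≤ payoff u11 u12 u21 u22 (a + t * (p - a)) q'
    rw [hr, aff]
    have f1 := hab2 q' hq'
    rw [eq2] at f1
    have f2 := hpq2 q' hq'
    nlinarith [mul_le_mul_of_nonneg_left f1 ht1', mul_le_mul_of_nonneg_left f2 ht0]

theorem stmt1 (u11 u12 u21 u22 : ℝ)
    (hfin : Set.Finite {pq : ℝ × ℝ | IsNE u11 u12 u21 u22 pq.1 pq.2}) :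
    ((∃ p q : ℝ, IsNE u11 u12 u21 u22 p q ∧ p ∈ ({0, 1} : Set ℝ) ∧ q ∈ ({0, 1} : Set ℝ)) →
      ∀ p q : ℝ, p ∈ Set.Ioo (0 : ℝ) 1 → q ∈ Set.Ioo (0 : ℝ) 1 →
        ¬ IsNE u11 u12 u21 u22 p q) ∧
    ((∃ p q : ℝ, IsNE u11 u12 u21 u22 p q ∧ p ∈ Set.Ioo (0 : ℝ) 1 ∧ q ∈ Set.Ioo (0 : ℝ) 1) →
      ∀ p q : ℝ, p ∈ ({0, 1} : Set ℝ) → q ∈ ({0, 1} : Set ℝ) →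
        ¬ IsNE u11 u12 u21 u22 p q) := by
  constructor
  · rintro ⟨a, b, h1, ha, -⟩ p q hp _ h2
    have h := key u11 u12 u21 u22 hfin a b p q h1 h2
    rcases ha with rfl | ha
    · exact absurd hp.1 (by linarith)
    · have ha' : a = 1 := ha
      exact absurd hp.2 (by linarith)
  · rintro ⟨p, q, h2, hp, -⟩ a b ha _ h1
    have h := key u11 u12 u21 u22 hfin a b p q h1 h2
    rcases ha with rfl | ha
    · exact absurd hp.1 (by linarith)
    · have ha' : a = 1 := ha
      exact absurd hp.2 (by linarith)
end

section
/- Consider a 2×2 zero-sum game with payoff matrix entries u11, u12, u21, u22, and let S ⊆ [0,1]×[0,1] be its set of Nash equilibria. If S is finite and S contains a pair (p*, q*) with p* ∈ (0,1) and q* ∈ (0,1), then S = {(p*, q*)}, i.e., (p*, q*) is the unique Nash equilibrium of the game. -/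
theorem stmt2 (u11 u12 u21 u22 p q : ℝ)
    (hfin : Set.Finite {pq : ℝ × ℝ | IsNE u11 u12 u21 u22 pq.1 pq.2})
    (hNE : IsNE u11 u12 u21 u22 p q)
    (hp : p ∈ Set.Ioo (0 : ℝ) 1) (hq : q ∈ Set.Ioo (0 : ℝ) 1) :
    {pq : ℝ × ℝ | IsNE u11 u12 u21 u22 pq.1 pq.2} = {(p, q)} := by
  obtain ⟨hp0, hp1⟩ := hp
  obtain ⟨hq0, hq1⟩ := hq
  obtain ⟨_, _, h1, h2⟩ := hNE
  have i0 : (0 : ℝ) ∈ Set.Icc (0 : ℝ) 1 := by simp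
  have i1 : (1 : ℝ) ∈ Set.Icc (0 : ℝ) 1 := by simp
  have ip : p ∈ Set.Icc (0 : ℝ) 1 := ⟨hp0.le, hp1.le⟩
  have iq : q ∈ Set.Icc (0 : ℝ) 1 := ⟨hq0.le, hq1.le⟩
  -- both players are indifferent at a strictly mixed equilibrium
  have hA : u11 * q + u12 * (1 - q) - u21 * q - u22 * (1 - q) = 0 := by
    have a := h1 0 i0
    have b := h1 1 i1
    simp only [payoff] at a b
    apply le_antisymm
    · by_contra! h
      nlinarith [mul_pos h (sub_pos.2 hp1)]
    · by_contra! h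
      nlinarith [mul_pos (neg_pos.2 h) hp0]
  have hB : u11 * p + u21 * (1 - p) - u12 * p - u22 * (1 - p) = 0 := by
    have a := h2 0 i0
    have b := h2 1 i1
    simp only [payoff] at a b
    apply le_antisymm
    · by_contra! h
      nlinarith [mul_pos h hq0]
    · by_contra! h
      nlinarith [mul_pos (neg_pos.2 h) (sub_pos.2 hq1)]
  obtain ⟨D, hD⟩ : ∃ D, D = u11 - u12 - u21 + u22 := ⟨_, rfl⟩
  have key : ∀ x y, payoff u11 u12 u21 u22 x y
      = payoff u11 u12 u21 u22 p q + D * (x - p) * (y - q) := by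
    intro x y
    simp only [payoff, hD]
    linear_combination (x - p) * hA + (y - q) * hB
  have hD0 : D ≠ 0 := by
    intro h0
    have hsub : (fun x : ℝ => (x, (0 : ℝ))) '' Set.Icc (0 : ℝ) 1 ⊆
        {pq : ℝ × ℝ | IsNE u11 u12 u21 u22 pq.1 pq.2} := by
      rintro _ ⟨x, hx, rfl⟩
      refine ⟨hx, i0, fun p' _ => ?_, fun q' _ => ?_⟩
      · rw [key p', key x]; simp [h0]
      · rw [key x 0, key x q']; simp [h0]
    have hf := (hfin.subset hsub).of_finite_image
      (fun a _ b _ h => (Prod.ext_iff.1 h).1)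
    exact Set.Icc_infinite (zero_lt_one : (0 : ℝ) < 1) hf
  ext ⟨x, y⟩
  simp only [Set.mem_ofPred_eq, Set.mem_singleton_iff, Prod.mk.injEq]
  constructor
  · rintro ⟨_, _, g1, g2⟩
    have a0 := g1 0 i0
    have a1 := g1 1 i1
    have ap := g1 p ip
    have b0 := g2 0 i0
    have b1 := g2 1 i1
    have bq := g2 q iq
    rw [key x y] at a0 a1 ap b0 b1 bq
    rw [key 0 y] at a0
    rw [key 1 y] at a1
    rw [key p y] at ap
    rw [key x 0] at b0
    rw [key x 1] at b1
    rw [key x q] at bq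
    have hz : D * (x - p) * (y - q) = 0 := by
      apply le_antisymm <;> linarith
    rw [hz] at a0 a1 b0 b1
    have hy : D * (y - q) = 0 := by
      apply le_antisymm
      · by_contra! h
        nlinarith [mul_pos h (sub_pos.2 hp1)]
      · by_contra! h
        nlinarith [mul_pos (neg_pos.2 h) hp0]
    have hx : D * (x - p) = 0 := by
      apply le_antisymm
      · by_contra! h
        nlinarith [mul_pos h hq0]
      · by_contra! h
        nlinarith [mul_pos (neg_pos.2 h) (sub_pos.2 hq1)]
    exact ⟨sub_eq_zero.1 ((mul_eq_zero.1 hx).resolve_left hD0),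
      sub_eq_zero.1 ((mul_eq_zero.1 hy).resolve_left hD0)⟩
  · rintro ⟨rfl, rfl⟩
    exact ⟨ip, iq, h1, h2⟩
end

section
/- Consider a 2×2 zero-sum game with payoff matrix entries u11, u12, u21, u22, and let S ⊆ [0,1]×[0,1] be its set of Nash equilibria. If S is finite and S contains a pair (p*, q*) with p* ∈ {0,1} and q* ∈ {0,1}, then S = {(p*, q*)}, i.e., (p*, q*) is the unique Nash equilibrium of the game. -/
lemma payoff_q_affine (a b c d p q q' t : ℝ) :
    payoff a b c d p (q + t * (q' - q)) =
      (1 - t) * payoff a b c d p q + t * payoff a b c d p q' := by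
  unfold payoff; ring

lemma payoff_p_affine (a b c d p p' q t : ℝ) :
    payoff a b c d (p + t * (p' - p)) q =
      (1 - t) * payoff a b c d p q + t * payoff a b c d p' q := by
  unfold payoff; ring

lemma Icc_segment {x y t : ℝ} (hx : x ∈ Set.Icc (0 : ℝ) 1) (hy : y ∈ Set.Icc (0 : ℝ) 1)
    (ht : t ∈ Set.Icc (0 : ℝ) 1) : x + t * (y - x) ∈ Set.Icc (0 : ℝ) 1 := by
  obtain ⟨h1, h2⟩ := hx
  obtain ⟨h3, h4⟩ := hy
  obtain ⟨h5, h6⟩ := ht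
  constructor <;> nlinarith [mul_nonneg h5 h3, mul_nonneg (sub_nonneg.2 h6) h1,
    mul_nonneg h5 (sub_nonneg.2 h4), mul_nonneg (sub_nonneg.2 h6) (sub_nonneg.2 h2)]

/-- The set of equilibria is convex. -/
lemma isNE_segment {a b c d p q p' q' t : ℝ} (h : IsNE a b c d p q) (h' : IsNE a b c d p' q')
    (ht : t ∈ Set.Icc (0 : ℝ) 1) :
    IsNE a b c d (p + t * (p' - p)) (q + t * (q' - q)) := by
  obtain ⟨hp, hq, h1, h2⟩ := h
  obtain ⟨hp', hq', h1', h2'⟩ := h'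
  have hv : payoff a b c d p q = payoff a b c d p' q' :=
    le_antisymm ((h2 q' hq').trans (h1' p hp)) ((h2' q hq).trans (h1 p' hp'))
  have ht0 : 0 ≤ t := ht.1
  have ht1 : 0 ≤ 1 - t := sub_nonneg.2 ht.2
  have hP := Icc_segment hp hp' ht
  have hQ := Icc_segment hq hq' ht
  have key1 : ∀ x ∈ Set.Icc (0 : ℝ) 1,
      payoff a b c d x (q + t * (q' - q)) ≤ payoff a b c d p q := by
    intro x hx
    rw [payoff_q_affine]
    have e1 := mul_le_mul_of_nonneg_left (h1 x hx) ht1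
    have e2 := mul_le_mul_of_nonneg_left (h1' x hx) ht0
    rw [← hv] at e2
    linarith
  have key2 : ∀ y ∈ Set.Icc (0 : ℝ) 1,
      payoff a b c d p q ≤ payoff a b c d (p + t * (p' - p)) y := by
    intro y hy
    rw [payoff_p_affine]
    have e1 := mul_le_mul_of_nonneg_left (h2 y hy) ht1
    have e2 := mul_le_mul_of_nonneg_left (h2' y hy) ht0
    rw [← hv] at e2
    linarith
  exact ⟨hP, hQ, fun x hx => (key1 x hx).trans (key2 _ hQ),
    fun y hy => (key1 _ hP).trans (key2 y hy)⟩

theorem stmt3 (u11 u12 u21 u22 p q : ℝ)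
    (hfin : Set.Finite {pq : ℝ × ℝ | IsNE u11 u12 u21 u22 pq.1 pq.2})
    (hNE : IsNE u11 u12 u21 u22 p q)
    (hp : p ∈ ({0, 1} : Set ℝ)) (hq : q ∈ ({0, 1} : Set ℝ)) :
    {pq : ℝ × ℝ | IsNE u11 u12 u21 u22 pq.1 pq.2} = {(p, q)} := by
  apply Set.eq_singleton_iff_unique_mem.2
  refine ⟨hNE, ?_⟩
  rintro ⟨p', q'⟩ h'
  by_contra hne
  refine Set.infinite_of_injOn_mapsTo
    (f := fun t : ℝ => ((p + t * (p' - p), q + t * (q' - q)) : ℝ × ℝ))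
    (s := Set.Icc (0 : ℝ) 1) ?_ (fun t ht => isNE_segment hNE h' ht)
    (Set.Icc_infinite zero_lt_one) hfin
  intro s _ t _ hst
  simp only [Prod.mk.injEq, add_right_inj, mul_eq_mul_right_iff] at hst
  by_contra hs
  apply hne
  ext
  · exact sub_eq_zero.1 (hst.1.resolve_left hs)
  · exact sub_eq_zero.1 (hst.2.resolve_left hs)
end

section
/- Consider a 2×2 zero-sum game with payoff matrix entries u11, u12, u21, u22, and let S ⊆ [0,1]×[0,1] be its set of Nash equilibria. Then either S has exactly one element or S is infinite. Moreover, if S = {(p*, q*)} is a singleton, then exactly one of the following holds: (1) p* ∈ {0,1} and q* ∈ {0,1}; or (2) p* ∈ (0,1) and q* ∈ (0,1). -/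
lemma ne_iff (u11 u12 u21 u22 p q : ℝ) : IsNE u11 u12 u21 u22 p q ↔
    (0 ≤ p ∧ p ≤ 1) ∧ (0 ≤ q ∧ q ≤ 1) ∧
    (1 - p) * ((u12 - u22) + (u11 - u12 - u21 + u22) * q) ≤ 0 ∧
    0 ≤ p * ((u12 - u22) + (u11 - u12 - u21 + u22) * q) ∧
    0 ≤ (1 - q) * ((u21 - u22) + (u11 - u12 - u21 + u22) * p) ∧
    q * ((u21 - u22) + (u11 - u12 - u21 + u22) * p) ≤ 0 := by
  unfold IsNE payoff
  simp only [Set.mem_Icc]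
  constructor
  · rintro ⟨hp, hq, h1, h2⟩
    have a1 := h1 0 (by norm_num)
    have a2 := h1 1 (by norm_num)
    have a3 := h2 0 (by norm_num)
    have a4 := h2 1 (by norm_num)
    refine ⟨hp, hq, ?_, ?_, ?_, ?_⟩ <;> linarith
  · rintro ⟨hp, hq, a1, a2, a3, a4⟩
    refine ⟨hp, hq, ?_, ?_⟩
    · rintro p' ⟨h0, h1⟩
      have e1 := mul_nonneg h0 (neg_nonneg.2 a1)
      have e2 := mul_nonneg (sub_nonneg.2 h1) a2
      linarith
    · rintro q' ⟨h0, h1⟩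
      have e1 := mul_nonneg h0 a3
      have e2 := mul_nonneg (sub_nonneg.2 h1) (neg_nonneg.2 a4)
      linarith

lemma ne_exists (u11 u12 u21 u22 : ℝ) : ∃ p q, IsNE u11 u12 u21 u22 p q := by
  simp only [ne_iff]
  generalize u11 - u12 - u21 + u22 = a
  generalize u12 - u22 = b
  generalize u21 - u22 = c
  by_cases h11 : 0 ≤ b + a ∧ c + a ≤ 0
  · exact ⟨1, 1, by norm_num; exact h11⟩
  by_cases h00 : b ≤ 0 ∧ 0 ≤ c
  · exact ⟨0, 0, by norm_num; exact h00⟩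
  by_cases h10 : 0 ≤ b ∧ 0 ≤ c + a
  · exact ⟨1, 0, by norm_num; exact h10⟩
  by_cases h01 : b + a ≤ 0 ∧ c ≤ 0
  · exact ⟨0, 1, by norm_num; exact h01⟩
  have key : (a < 0 ∧ 0 ≤ b ∧ b + a ≤ 0 ∧ 0 ≤ c ∧ c + a ≤ 0) ∨
      (0 < a ∧ b ≤ 0 ∧ 0 ≤ b + a ∧ c ≤ 0 ∧ 0 ≤ c + a) := by
    grind
  have ha : a ≠ 0 := by grind
  have e1 : b + a * (-b / a) = 0 := by field_simp; ring
  have e2 : c + a * (-c / a) = 0 := by field_simp; ring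
  refine ⟨-c / a, -b / a, ?_, ?_, ?_⟩
  · rcases key with ⟨h, k1, k2, k3, k4⟩ | ⟨h, k1, k2, k3, k4⟩
    · exact ⟨div_nonneg_of_nonpos (by linarith) h.le, (div_le_one_of_neg h).2 (by linarith)⟩
    · exact ⟨div_nonneg (by linarith) h.le, (div_le_one h).2 (by linarith)⟩
  · rcases key with ⟨h, k1, k2, k3, k4⟩ | ⟨h, k1, k2, k3, k4⟩
    · exact ⟨div_nonneg_of_nonpos (by linarith) h.le, (div_le_one_of_neg h).2 (by linarith)⟩
    · exact ⟨div_nonneg (by linarith) h.le, (div_le_one h).2 (by linarith)⟩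
  · simp [e1, e2]

lemma ne_segment {u11 u12 u21 u22 p q r s t : ℝ} (h : IsNE u11 u12 u21 u22 p q)
    (k : IsNE u11 u12 u21 u22 r s) (ht : t ∈ Set.Icc (0 : ℝ) 1) :
    IsNE u11 u12 u21 u22 (p + t * (r - p)) (q + t * (s - q)) := by
  obtain ⟨hp, hq, h1, h2⟩ := h
  obtain ⟨hr, hs, k1, k2⟩ := k
  obtain ⟨t0, t1⟩ := ht
  have t1' : 0 ≤ 1 - t := by linarith
  have hL : ∀ x, payoff u11 u12 u21 u22 x (q + t * (s - q)) =
      (1 - t) * payoff u11 u12 u21 u22 x q + t * payoff u11 u12 u21 u22 x s := by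
    intro x; unfold payoff; ring
  have hR : ∀ y, payoff u11 u12 u21 u22 (p + t * (r - p)) y =
      (1 - t) * payoff u11 u12 u21 u22 p y + t * payoff u11 u12 u21 u22 r y := by
    intro y; unfold payoff; ring
  have a1 := h1 r hr
  have a2 := h2 s hs
  have a3 := k1 p hp
  have a4 := k2 q hq
  have e1 : payoff u11 u12 u21 u22 p s = payoff u11 u12 u21 u22 p q := by linarith
  have e2 : payoff u11 u12 u21 u22 r q = payoff u11 u12 u21 u22 p q := by linarith
  have e3 : payoff u11 u12 u21 u22 r s = payoff u11 u12 u21 u22 p q := by linarith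
  refine ⟨⟨?_, ?_⟩, ⟨?_, ?_⟩, ?_, ?_⟩
  · nlinarith [mul_nonneg t1' hp.1, mul_nonneg t0 hr.1]
  · nlinarith [mul_nonneg t1' (sub_nonneg.2 hp.2), mul_nonneg t0 (sub_nonneg.2 hr.2)]
  · nlinarith [mul_nonneg t1' hq.1, mul_nonneg t0 hs.1]
  · nlinarith [mul_nonneg t1' (sub_nonneg.2 hq.2), mul_nonneg t0 (sub_nonneg.2 hs.2)]
  · intro x hx
    have b1 := mul_le_mul_of_nonneg_left (h1 x hx) t1'
    have b2 := mul_le_mul_of_nonneg_left (k1 x hx) t0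
    rw [e3] at b2
    rw [hL, hL, hR, hR, e1, e2, e3]
    linarith
  · intro y hy
    have b1 := mul_le_mul_of_nonneg_left (h2 y hy) t1'
    have b2 := mul_le_mul_of_nonneg_left (k2 y hy) t0
    rw [e3] at b2
    rw [hL, hR, hR, hR, e1, e2, e3]
    linarith

lemma ne_pure_or_mixed (u11 u12 u21 u22 p q : ℝ) (h : IsNE u11 u12 u21 u22 p q)
    (hu : ∀ r s, IsNE u11 u12 u21 u22 r s → r = p ∧ s = q) :
    ((p = 0 ∨ p = 1) ∧ (q = 0 ∨ q = 1)) ∨ ((0 < p ∧ p < 1) ∧ (0 < q ∧ q < 1)) := by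
  simp only [ne_iff] at h hu
  generalize u11 - u12 - u21 + u22 = a at *
  generalize u12 - u22 = b at *
  generalize u21 - u22 = c at *
  obtain ⟨⟨p0, p1⟩, ⟨q0, q1⟩, h1, h2, h3, h4⟩ := h
  have u00 := hu 0 0
  have u01 := hu 0 1
  have u10 := hu 1 0
  have u11 := hu 1 1
  norm_num at u00 u01 u10 u11
  rcases eq_or_lt_of_le p0 with p0 | p0
  · subst p0
    left
    refine ⟨Or.inl rfl, ?_⟩
    by_contra! hq
    have q0 := lt_of_le_of_ne q0 (Ne.symm hq.1)
    have q1 := lt_of_le_of_ne q1 hq.2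
    have hc : c = 0 := by nlinarith
    have : b ≤ 0 ∨ b + a ≤ 0 := by by_contra! hh; nlinarith
    grind
  rcases eq_or_lt_of_le p1 with p1 | p1
  · subst p1
    left
    refine ⟨Or.inr rfl, ?_⟩
    by_contra! hq
    have q0 := lt_of_le_of_ne q0 (Ne.symm hq.1)
    have q1 := lt_of_le_of_ne q1 hq.2
    have hc : c + a = 0 := by nlinarith
    have : 0 ≤ b ∨ 0 ≤ b + a := by by_contra! hh; nlinarith
    grind
  right
  refine ⟨⟨p0, p1⟩, ?_⟩
  rcases eq_or_lt_of_le q0 with q0 | q0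
  · subst q0
    exfalso
    have hc : b = 0 := by nlinarith
    have : 0 ≤ c ∨ 0 ≤ c + a := by by_contra! hh; nlinarith
    grind
  rcases eq_or_lt_of_le q1 with q1 | q1
  · subst q1
    exfalso
    have hc : b + a = 0 := by nlinarith
    have : c ≤ 0 ∨ c + a ≤ 0 := by by_contra! hh; nlinarith
    grind
  exact ⟨q0, q1⟩

theorem stmt4 (u11 u12 u21 u22 : ℝ) :
    ((∃ a : ℝ × ℝ, {pq : ℝ × ℝ | IsNE u11 u12 u21 u22 pq.1 pq.2} = {a}) ∨
      Set.Infinite {pq : ℝ × ℝ | IsNE u11 u12 u21 u22 pq.1 pq.2}) ∧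
    (∀ p q : ℝ, {pq : ℝ × ℝ | IsNE u11 u12 u21 u22 pq.1 pq.2} = {(p, q)} →
      Xor' (p ∈ ({0, 1} : Set ℝ) ∧ q ∈ ({0, 1} : Set ℝ))
           (p ∈ Set.Ioo (0 : ℝ) 1 ∧ q ∈ Set.Ioo (0 : ℝ) 1)) := by
  constructor
  · obtain ⟨p, q, h⟩ := ne_exists u11 u12 u21 u22
    by_cases hu : ∀ r s, IsNE u11 u12 u21 u22 r s → (r, s) = (p, q)
    · left
      refine ⟨(p, q), Set.eq_singleton_iff_unique_mem.2 ⟨h, ?_⟩⟩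
      rintro ⟨r, s⟩ hrs
      exact hu r s hrs
    · right
      push Not at hu
      obtain ⟨r, s, k, hne⟩ := hu
      refine Set.infinite_of_injOn_mapsTo (s := Set.Icc (0 : ℝ) 1)
        (f := fun t => (p + t * (r - p), q + t * (s - q))) ?_
        (fun t ht => ne_segment h k ht) (Set.Icc_infinite one_pos)
      intro t _ t' _ htt
      simp only [Prod.mk.injEq, add_right_inj, mul_eq_mul_right_iff] at htt
      by_contra hc
      apply hne
      obtain ⟨h1, h2⟩ := htt
      have h1 := h1.resolve_left hc
      have h2 := h2.resolve_left hc
      rw [sub_eq_zero.1 h1, sub_eq_zero.1 h2]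
  · intro p q hS
    obtain ⟨h, hu⟩ := Set.eq_singleton_iff_unique_mem.1 hS
    have := ne_pure_or_mixed u11 u12 u21 u22 p q h (fun r s hrs => by
      have := hu (r, s) hrs
      simpa using this)
    simp only [Set.mem_insert_iff, Set.mem_singleton_iff, Set.mem_Ioo]
    unfold Xor'
    grind
end

section
/- Consider a 2×2 zero-sum game with payoff matrix entries u11, u12, u21, u22, whose set of Nash equilibria S is a singleton {(p*, q*)}. Then (p*, q*) = (1, 0) if and only if u11 > u12 > u22. Furthermore, in that case the equilibrium payoff is u(p*, q*) = u12. -/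
/-- For `d > 0` there is a weight `t ∈ (0,1]` with `t x + (1-t) d ≥ 0`. -/
lemma exists_weight (x d : ℝ) (hd : 0 < d) :
    ∃ t : ℝ, 0 < t ∧ t ≤ 1 ∧ 0 ≤ t * x + (1 - t) * d := by
  have hx := abs_nonneg x
  have hpos : 0 < d + |x| := by linarith
  refine ⟨d / (d + |x|), by positivity, (div_le_one hpos).2 (by linarith), ?_⟩
  have e : d / (d + |x|) * x + (1 - d / (d + |x|)) * d = d * (x + |x|) / (d + |x|) := by
    field_simp
    ring
  rw [e]
  have := neg_abs_le x
  exact div_nonneg (mul_nonneg hd.le (by linarith)) hpos.le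

/-- If the first row is constant, `(1, q)` is an equilibrium once Player 1 weakly prefers it. -/
lemma isNE_row (a u21 u22 q : ℝ) (h0 : 0 ≤ q) (h1 : q ≤ 1)
    (h : 0 ≤ q * (a - u21) + (1 - q) * (a - u22)) : IsNE a a u21 u22 1 q := by
  refine ⟨by simp, ⟨h0, h1⟩, ?_, ?_⟩
  · rintro p' ⟨hp0, hp1⟩
    simp only [payoff]
    nlinarith [mul_nonneg (sub_nonneg.2 hp1) h]
  · rintro q' -
    simp only [payoff]
    linarith

/-- If the second column is constant, `(p, 0)` is an equilibrium once Player 2 weakly prefers it. -/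
lemma isNE_col (u11 a u21 p : ℝ) (h0 : 0 ≤ p) (h1 : p ≤ 1)
    (h : 0 ≤ p * (u11 - a) + (1 - p) * (u21 - a)) : IsNE u11 a u21 a p 0 := by
  refine ⟨⟨h0, h1⟩, by simp, ?_, ?_⟩
  · rintro p' -
    simp only [payoff]
    linarith
  · rintro q' ⟨hq0, hq1⟩
    simp only [payoff]
    nlinarith [mul_nonneg hq0 h]

theorem stmt10 (u11 u12 u21 u22 p q : ℝ)
    (hS : {pq : ℝ × ℝ | IsNE u11 u12 u21 u22 pq.1 pq.2} = {(p, q)}) :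
    ((p, q) = ((1 : ℝ), (0 : ℝ)) ↔ (u11 > u12 ∧ u12 > u22)) ∧
    ((u11 > u12 ∧ u12 > u22) → payoff u11 u12 u21 u22 p q = u12) := by
  have key : ∀ a b, IsNE u11 u12 u21 u22 a b ↔ (a = p ∧ b = q) := by
    intro a b
    have : (a, b) ∈ {pq : ℝ × ℝ | IsNE u11 u12 u21 u22 pq.1 pq.2} ↔ (a, b) ∈ ({(p, q)} : Set (ℝ × ℝ)) := by
      rw [hS]
    simpa using this
  have back : (u11 > u12 ∧ u12 > u22) → 1 = p ∧ 0 = q := by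
    rintro ⟨h1, h2⟩
    rw [← key]
    refine ⟨by simp, by simp, ?_, ?_⟩
    · rintro p' ⟨hp0, hp1⟩
      simp only [payoff]
      nlinarith [mul_nonneg (sub_nonneg.2 hp1) (sub_nonneg.2 h2.le)]
    · rintro q' ⟨hq0, hq1⟩
      simp only [payoff]
      nlinarith [mul_nonneg hq0 (sub_nonneg.2 h1.le)]
  refine ⟨⟨?_, ?_⟩, ?_⟩
  · intro h
    obtain ⟨rfl, rfl⟩ := Prod.mk.inj h
    obtain ⟨-, -, hA, hB⟩ := (key 1 0).2 ⟨rfl, rfl⟩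
    have hA0 := hA 0 (by simp)
    have hB1 := hB 1 (by simp)
    simp only [payoff] at hA0 hB1
    have h1 : u12 ≤ u11 := by linarith
    have h2 : u22 ≤ u12 := by linarith
    rcases h1.eq_or_lt with e1 | l1
    · exfalso
      subst e1
      rcases h2.eq_or_lt with e2 | l2
      · subst e2
        rcases le_total u21 u22 with h3 | h3
        · have := (key 1 1).1 (isNE_row _ _ _ 1 (by simp) (by simp) (by linarith))
          simp at this
        · have := (key 0 0).1 (isNE_col _ _ _ 0 (by simp) (by simp) (by linarith))
          simp at this
      · obtain ⟨t, t0, t1, ht⟩ := exists_weight (u12 - u21) (u12 - u22) (by linarith)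
        have := (key 1 t).1 (isNE_row _ _ _ t t0.le t1 ht)
        linarith [this.2]
    · refine ⟨l1, ?_⟩
      rcases h2.eq_or_lt with e2 | l2
      · exfalso
        subst e2
        obtain ⟨t, t0, t1, ht⟩ := exists_weight (u21 - u22) (u11 - u22) (by linarith)
        have := (key (1 - t) 0).1 (isNE_col _ _ _ (1 - t) (by linarith) (by linarith) (by linarith))
        linarith [this.1]
      · exact l2
  · intro h
    obtain ⟨rfl, rfl⟩ := back h
    rfl
  · intro h
    obtain ⟨rfl, rfl⟩ := back h
    simp [payoff]
end

section
/- Consider a 2×2 zero-sum game with payoff matrix entries u11, u12, u21, u22, whose set of Nash equilibria S is a singleton {(p*, q*)}. Then (p*, q*) = (0, 0) if and only if u21 > u22 > u12. Furthermore, in that case the equilibrium payoff is u(p*, q*) = u22. -/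
theorem isNE_of_pure (a b c d p q v : ℝ) (hp : p ∈ Set.Icc (0 : ℝ) 1) (hq : q ∈ Set.Icc (0 : ℝ) 1)
    (hv : payoff a b c d p q = v)
    (h1 : a * q + b * (1 - q) ≤ v) (h2 : c * q + d * (1 - q) ≤ v)
    (h3 : v ≤ a * p + c * (1 - p)) (h4 : v ≤ b * p + d * (1 - p)) : IsNE a b c d p q := by
  refine ⟨hp, hq, ?_, ?_⟩
  · rintro x ⟨hx0, hx1⟩
    rw [hv]
    unfold payoff
    have e1 := mul_le_mul_of_nonneg_left h1 hx0
    have e2 := mul_le_mul_of_nonneg_left h2 (sub_nonneg.2 hx1)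
    linarith
  · rintro x ⟨hx0, hx1⟩
    rw [hv]
    unfold payoff
    have e1 := mul_le_mul_of_nonneg_left h3 hx0
    have e2 := mul_le_mul_of_nonneg_left h4 (sub_nonneg.2 hx1)
    linarith

theorem stmt12 (u11 u12 u21 u22 p q : ℝ)
    (hS : {pq : ℝ × ℝ | IsNE u11 u12 u21 u22 pq.1 pq.2} = {(p, q)}) :
    ((p, q) = ((0 : ℝ), (0 : ℝ)) ↔ (u21 > u22 ∧ u22 > u12)) ∧
    ((u21 > u22 ∧ u22 > u12) → payoff u11 u12 u21 u22 p q = u22) := by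
  have huniq : ∀ x y, IsNE u11 u12 u21 u22 x y → x = p ∧ y = q := by
    intro x y h
    have h' : (x, y) ∈ {pq : ℝ × ℝ | IsNE u11 u12 u21 u22 pq.1 pq.2} := h
    rw [hS] at h'
    simpa using h'
  have hne : IsNE u11 u12 u21 u22 p q := by
    have h' : (p, q) ∈ {pq : ℝ × ℝ | IsNE u11 u12 u21 u22 pq.1 pq.2} := by rw [hS]; rfl
    exact h'
  have hback : (u21 > u22 ∧ u22 > u12) → p = 0 ∧ q = 0 := by
    rintro ⟨h1, h2⟩
    have := huniq 0 0 (isNE_of_pure _ _ _ _ 0 0 u22 (by simp) (by simp) (by simp [payoff])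
      (by linarith) (by linarith) (by linarith) (by linarith))
    exact ⟨this.1.symm, this.2.symm⟩
  refine ⟨⟨?_, fun h => by rw [(hback h).1, (hback h).2]⟩, fun h => by
    rw [(hback h).1, (hback h).2]; simp [payoff]⟩
  intro h
  obtain ⟨rfl, rfl⟩ := Prod.mk.inj h
  obtain ⟨-, -, hA, hB⟩ := hne
  have h1 : u12 ≤ u22 := by simpa [payoff] using hA 1 (by simp)
  have h2 : u22 ≤ u21 := by simpa [payoff] using hB 1 (by simp)
  rcases h2.lt_or_eq with h2' | h2'
  · rcases h1.lt_or_eq with h1' | h1'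
    · exact ⟨h2', h1'⟩
    · exfalso
      subst h1'
      by_cases hc : u12 ≤ u11
      · have := (huniq 1 0 (isNE_of_pure _ _ _ _ 1 0 u12 (by simp) (by simp) (by simp [payoff])
          (by linarith) (by linarith) (by linarith) (by linarith))).1
        norm_num at this
      · push Not at hc
        have hd : 0 < u21 - u11 := by linarith
        obtain ⟨x, hx⟩ : ∃ x, x = (u21 - u12) / (u21 - u11) := ⟨_, rfl⟩
        have hx0 : 0 < x := by rw [hx]; exact div_pos (by linarith) hd
        have hx1 : x ≤ 1 := by rw [hx, div_le_one hd]; linarith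
        have hxe : x * (u21 - u11) = u21 - u12 := by rw [hx]; field_simp
        have := (huniq x 0 (isNE_of_pure _ _ _ _ x 0 u12 ⟨hx0.le, hx1⟩ (by simp)
          (by unfold payoff; ring)
          (by linarith) (by linarith) (by linarith) (by linarith))).1
        linarith
  · exfalso
    subst h2'
    by_cases hc : u11 ≤ u22
    · have := (huniq 0 1 (isNE_of_pure _ _ _ _ 0 1 u22 (by simp) (by simp) (by simp [payoff])
        (by linarith) (by linarith) (by linarith) (by linarith))).2
      norm_num at this
    · push Not at hc
      rcases h1.lt_or_eq with h1' | h1'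
      · have hd : 0 < u11 - u12 := by linarith
        obtain ⟨x, hx⟩ : ∃ x, x = (u22 - u12) / (u11 - u12) := ⟨_, rfl⟩
        have hx0 : 0 < x := by rw [hx]; exact div_pos (by linarith) hd
        have hx1 : x ≤ 1 := by rw [hx, div_le_one hd]; linarith
        have hxe : x * (u11 - u12) = u22 - u12 := by rw [hx]; field_simp
        have := (huniq 0 x (isNE_of_pure _ _ _ _ 0 x u22 (by simp) ⟨hx0.le, hx1⟩
          (by unfold payoff; ring)
          (by linarith) (by linarith) (by linarith) (by linarith))).2
        linarith
      · subst h1'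
        have := (huniq 1 0 (isNE_of_pure _ _ _ _ 1 0 u12 (by simp) (by simp) (by simp [payoff])
          (by linarith) (by linarith) (by linarith) (by linarith))).1
        norm_num at this
end

section
/- Consider a 2×2 zero-sum game with payoff matrix entries u11, u12, u21, u22, and let S ⊆ [0,1]×[0,1] be its set of Nash equilibria. Then S = {(p, q) ∈ [0,1]×[0,1] : p = 1} (i.e., the set of pairs with Player 1 playing its first action with probability 1 and Player 2 playing any mixed strategy) if and only if either (u11 = u12 and u21 = u22 and u11 > u21) or (u11 = u12 and u11 ≥ max{u21, u22} and max{u21, u22} > min{u21, u22}). Furthermore, in that case every (p*, q*) ∈ S satisfies u(p*, q*) = u11 = u12. -/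
theorem cond_p_eq_one (u11 u12 u21 u22 p q : ℝ)
    (h : (u11 = u12 ∧ u21 = u22 ∧ u11 > u21) ∨
      (u11 = u12 ∧ u11 ≥ max u21 u22 ∧ max u21 u22 > min u21 u22))
    (hN : IsNE u11 u12 u21 u22 p q) : p = 1 := by
  obtain ⟨⟨hp0, hp1⟩, -, h1, h2⟩ := hN
  by_contra hne
  have hlt : 0 < 1 - p := sub_pos.mpr (lt_of_le_of_ne hp1 hne)
  have a1 := h1 1 (by simp)
  have b0 := h2 0 (by simp)
  have b1 := h2 1 (by simp)
  have he : u11 = u12 := by rcases h with h | h <;> exact h.1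
  subst he
  simp only [payoff] at a1 b0 b1
  have c0 : u11 ≤ u22 := le_of_mul_le_mul_left (by linarith) hlt
  have c1 : u11 ≤ u21 := le_of_mul_le_mul_left (by linarith) hlt
  rcases h with ⟨-, -, h⟩ | ⟨-, h, h'⟩
  · linarith
  · have := le_min c1 c0
    linarith

theorem stmt13 (u11 u12 u21 u22 : ℝ) :
    (({pq : ℝ × ℝ | IsNE u11 u12 u21 u22 pq.1 pq.2} =
        {pq : ℝ × ℝ | pq.1 = 1 ∧ pq.2 ∈ Set.Icc (0 : ℝ) 1}) ↔
      ((u11 = u12 ∧ u21 = u22 ∧ u11 > u21) ∨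
      (u11 = u12 ∧ u11 ≥ max u21 u22 ∧ max u21 u22 > min u21 u22))) ∧
    (((u11 = u12 ∧ u21 = u22 ∧ u11 > u21) ∨
      (u11 = u12 ∧ u11 ≥ max u21 u22 ∧ max u21 u22 > min u21 u22)) →
      ∀ p q : ℝ, IsNE u11 u12 u21 u22 p q →
        payoff u11 u12 u21 u22 p q = u11 ∧ payoff u11 u12 u21 u22 p q = u12) := by
  refine ⟨⟨fun hS => ?_, fun h => ?_⟩, fun h p q hN => ?_⟩
  · have key : ∀ p q : ℝ, IsNE u11 u12 u21 u22 p q ↔ p = 1 ∧ q ∈ Set.Icc (0 : ℝ) 1 :=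
      fun p q => Set.ext_iff.mp hS (p, q)
    obtain ⟨-, -, a1, a2⟩ := (key 1 0).mpr ⟨rfl, by simp⟩
    obtain ⟨-, -, b1, b2⟩ := (key 1 1).mpr ⟨rfl, by simp⟩
    have a1 := a1 0 (by simp)
    have a2 := a2 1 (by simp)
    have b1 := b1 0 (by simp)
    have b2 := b2 0 (by simp)
    simp only [payoff] at a1 a2 b1 b2
    have he : u11 = u12 := by linarith
    have h1 : u21 ≤ u11 := by linarith
    have h2 : u22 ≤ u11 := by linarith
    by_cases hbc : u21 = u22
    · left
      refine ⟨he, hbc, lt_of_le_of_ne h1 fun hc => ?_⟩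
      have : IsNE u11 u12 u21 u22 0 0 := by
        refine ⟨by simp, by simp, fun p' _ => ?_, fun q' _ => ?_⟩ <;>
        · rw [← he, ← hbc, hc]
          simp only [payoff]
          apply le_of_eq
          ring
      have := ((key 0 0).mp this).1
      norm_num at this
    · right
      exact ⟨he, max_le h1 h2, min_lt_max.mpr hbc⟩
  · ext ⟨p, q⟩
    simp only [Set.mem_setOf_eq]
    refine ⟨fun hN => ⟨cond_p_eq_one _ _ _ _ _ _ h hN, hN.2.1⟩, ?_⟩
    rintro ⟨rfl, hq⟩
    have hh : u11 = u12 ∧ u21 ≤ u11 ∧ u22 ≤ u11 := by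
      rcases h with ⟨h, h', h''⟩ | ⟨h, h', -⟩
      · exact ⟨h, h''.le, h' ▸ h''.le⟩
      · exact ⟨h, (le_max_left _ _).trans h', (le_max_right _ _).trans h'⟩
    obtain ⟨rfl, h1, h2⟩ := hh
    refine ⟨by simp, hq, fun p' hp => ?_, fun q' _ => ?_⟩
    · simp only [payoff]
      have e1 := mul_nonneg (mul_nonneg (sub_nonneg.mpr hp.2) hq.1) (sub_nonneg.mpr h1)
      have e2 := mul_nonneg (mul_nonneg (sub_nonneg.mpr hp.2) (sub_nonneg.mpr hq.2))
        (sub_nonneg.mpr h2)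
      linarith
    · simp only [payoff]
      linarith
  · have hp := cond_p_eq_one _ _ _ _ _ _ h hN
    have he : u11 = u12 := by rcases h with h | h <;> exact h.1
    subst hp he
    simp only [payoff]
    constructor <;> ring
end

section
/- Consider a 2×2 zero-sum game with payoff matrix entries u11, u12, u21, u22, let δ = u11 − u12 − u21 + u22, and let S ⊆ [0,1]×[0,1] be its set of Nash equilibria. Then S = {(p, q) ∈ [0,1]×[0,1] : p = 0 and 0 ≤ q ≤ (u22 − u12)/δ} with 0 < (u22 − u12)/δ < 1, if and only if u11 > u21, u21 = u22 and u22 > u12. Furthermore, in that case every (p*, q*) ∈ S satisfies u(p*, q*) = u21 = u22. -/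
theorem ne_aux (u11 u12 u21 u22 p q : ℝ) (h1 : u11 > u21) (h2 : u21 = u22) (h3 : u22 > u12)
    (h : IsNE u11 u12 u21 u22 p q) :
    p = 0 ∧ 0 ≤ q ∧ (u11 - u12 - u21 + u22) * q ≤ u22 - u12 := by
  obtain ⟨⟨hp0, hp1⟩, ⟨hq0, hq1⟩, hP, hQ⟩ := h
  subst h2
  have a0 := hQ 0 (by simp)
  have b0 := hP 0 (by simp)
  have b1 := hP 1 (by simp)
  simp only [payoff] at a0 b0 b1
  have hp : p = 0 := by
    by_contra hne
    have hp : 0 < p := lt_of_le_of_ne hp0 (Ne.symm hne)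
    have hd : 0 < (u11 - u12) * p := mul_pos (by linarith) hp
    have hq : q = 0 := by
      by_contra hqne
      have hq : 0 < q := lt_of_le_of_ne hq0 (Ne.symm hqne)
      have := mul_pos hd hq
      nlinarith
    subst hq
    have := mul_pos hp (sub_pos.2 h3)
    nlinarith
  subst hp
  exact ⟨rfl, hq0, by nlinarith⟩

theorem stmt15 (u11 u12 u21 u22 δ : ℝ)
    (hδ : δ = u11 - u12 - u21 + u22) :
    (({pq : ℝ × ℝ | IsNE u11 u12 u21 u22 pq.1 pq.2} =
        {pq : ℝ × ℝ | pq.1 = 0 ∧ 0 ≤ pq.2 ∧ pq.2 ≤ (u22 - u12) / δ} ∧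
      0 < (u22 - u12) / δ ∧ (u22 - u12) / δ < 1) ↔
      (u11 > u21 ∧ u21 = u22 ∧ u22 > u12)) ∧
    ((u11 > u21 ∧ u21 = u22 ∧ u22 > u12) →
      ∀ p q : ℝ, IsNE u11 u12 u21 u22 p q →
        payoff u11 u12 u21 u22 p q = u21 ∧ payoff u11 u12 u21 u22 p q = u22) := by
  have key : u11 > u21 ∧ u21 = u22 ∧ u22 > u12 → 0 < δ := by
    rintro ⟨h1, h2, h3⟩
    linarith
  refine ⟨⟨?_, ?_⟩, ?_⟩
  · rintro ⟨hS, ht0, ht1⟩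
    have hδ0 : δ ≠ 0 := by
      rintro h
      simp [h] at ht0
    have e : (u22 - u12) / δ * δ = u22 - u12 := div_mul_cancel₀ _ hδ0
    set t := (u22 - u12) / δ with ht
    have m0 : ((0 : ℝ), (0 : ℝ)) ∈ {pq : ℝ × ℝ | IsNE u11 u12 u21 u22 pq.1 pq.2} := by
      rw [hS]
      exact ⟨rfl, le_refl _, ht0.le⟩
    have mt : ((0 : ℝ), t) ∈ {pq : ℝ × ℝ | IsNE u11 u12 u21 u22 pq.1 pq.2} := by
      rw [hS]
      exact ⟨rfl, ht0.le, le_refl _⟩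
    have a := m0.2.2.1 1 (by simp)
    have b := mt.2.2.2 0 (by simp)
    have c := mt.2.2.2 1 (by simp)
    simp only [payoff] at a b c
    have h2 : u21 = u22 := by
      apply le_antisymm
      · by_contra hc
        have := mul_pos ht0 (sub_pos.2 (not_le.1 hc))
        nlinarith
      · by_contra hc
        have := mul_pos (sub_pos.2 ht1) (sub_pos.2 (not_le.1 hc))
        nlinarith
    have hd : 0 < δ := by
      by_contra hc
      have hc' : δ < 0 := lt_of_le_of_ne (not_lt.1 hc) hδ0
      have := mul_neg_of_pos_of_neg ht0 hc'
      linarith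
    have h3 := mul_pos ht0 hd
    have h4 := mul_pos (sub_pos.2 ht1) hd
    refine ⟨?_, h2, ?_⟩
    · nlinarith
    · linarith
  · intro h
    have hd := key h
    obtain ⟨h1, h2, h3⟩ := h
    have ht1 : (u22 - u12) / δ < 1 := by
      rw [div_lt_one hd]
      linarith
    refine ⟨?_, div_pos (by linarith) hd, ht1⟩
    ext ⟨p, q⟩
    simp only [Set.mem_setOf_eq]
    constructor
    · intro hne
      obtain ⟨x, y, z⟩ := ne_aux _ _ _ _ _ _ h1 h2 h3 hne
      refine ⟨x, y, ?_⟩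
      rw [le_div_iff₀ hd, hδ]
      linarith
    · rintro ⟨rfl, hq0, hq⟩
      have hq1 : q ≤ 1 := by linarith
      rw [le_div_iff₀ hd, hδ] at hq
      refine ⟨by simp, ⟨hq0, hq1⟩, ?_, ?_⟩
      · rintro p' ⟨hp0, hp1⟩
        have := mul_nonneg hp0 (sub_nonneg.2 hq)
        simp only [payoff]
        nlinarith
      · rintro q' -
        simp only [payoff]
        subst h2
        apply le_of_eq
        ring
  · rintro ⟨h1, h2, h3⟩ p q h
    obtain ⟨rfl, -, -⟩ := ne_aux _ _ _ _ _ _ h1 h2 h3 h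
    subst h2
    constructor <;> simp only [payoff] <;> ring
end

section
/- Consider a 2×2 zero-sum game with payoff matrix entries u11, u12, u21, u22. If (u11 − u12)·(u22 − u21) ≤ 0 or (u11 − u21)·(u22 − u12) ≤ 0, then every Nash equilibrium (p*, q*) of the game satisfies u(p*, q*) = min{max{u11, u21}, max{u12, u22}} = max{min{u11, u12}, min{u21, u22}}. -/
/-- A weak dominance makes the pure minimax and maximin values agree. -/
theorem minmax_le_maxmin (u11 u12 u21 u22 : ℝ)
    (h : (u11 - u12) * (u22 - u21) ≤ 0 ∨ (u11 - u21) * (u22 - u12) ≤ 0) :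
    min (max u11 u21) (max u12 u22) ≤ max (min u11 u12) (min u21 u22) := by
  rcases h with h | h <;> rcases mul_nonpos_iff.1 h with ⟨h1, h2⟩ | ⟨h1, h2⟩ <;> grind

/-- A convex combination is at least the minimum. -/
theorem min_le_comb (a b q : ℝ) (h0 : 0 ≤ q) (h1 : q ≤ 1) : min a b ≤ a * q + b * (1 - q) := by
  nlinarith [mul_le_mul_of_nonneg_right (min_le_left a b) h0,
    mul_le_mul_of_nonneg_right (min_le_right a b) (sub_nonneg.2 h1)]

/-- A convex combination is at most the maximum. -/
theorem comb_le_max (a b q : ℝ) (h0 : 0 ≤ q) (h1 : q ≤ 1) : a * q + b * (1 - q) ≤ max a b := by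
  nlinarith [mul_le_mul_of_nonneg_right (le_max_left a b) h0,
    mul_le_mul_of_nonneg_right (le_max_right a b) (sub_nonneg.2 h1)]

theorem stmt16 (u11 u12 u21 u22 : ℝ)
    (h : (u11 - u12) * (u22 - u21) ≤ 0 ∨ (u11 - u21) * (u22 - u12) ≤ 0) :
    ∀ p q : ℝ, IsNE u11 u12 u21 u22 p q →
      payoff u11 u12 u21 u22 p q = min (max u11 u21) (max u12 u22) ∧
      payoff u11 u12 u21 u22 p q = max (min u11 u12) (min u21 u22) := by
  rintro p q ⟨⟨hp0, hp1⟩, ⟨hq0, hq1⟩, hP, hQ⟩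
  have key := minmax_le_maxmin u11 u12 u21 u22 h
  have a1 := hP 1 (by simp)
  have a0 := hP 0 (by simp)
  have b1 := hQ 1 (by simp)
  have b0 := hQ 0 (by simp)
  generalize hv : payoff u11 u12 u21 u22 p q = v at *
  simp only [payoff] at a1 a0 b1 b0
  have lo : max (min u11 u12) (min u21 u22) ≤ v := by
    apply max_le
    · linarith [min_le_comb u11 u12 q hq0 hq1]
    · linarith [min_le_comb u21 u22 q hq0 hq1]
  have hi : v ≤ min (max u11 u21) (max u12 u22) := by
    apply le_min
    · linarith [comb_le_max u11 u21 p hp0 hp1]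
    · linarith [comb_le_max u12 u22 p hp0 hp1]
  exact ⟨le_antisymm hi (key.trans lo), le_antisymm (hi.trans key) lo⟩
end

section
/- Consider a 2×2 zero-sum game with payoff matrix entries u11, u12, u21, u22 satisfying (u11 − u12)·(u22 − u21) > 0 and (u11 − u21)·(u22 − u12) > 0. Let δ = u11 − u12 − u21 + u22 and q* = (u22 − u12)/δ. Then for every q ∈ [0,1]: (1) if (q < q* and δ > 0) or (q > q* and δ ≤ 0), then û(q) = u21·q + u22·(1−q); (2) if (q > q* and δ > 0) or (q < q* and δ ≤ 0), then û(q) = u11·q + u12·(1−q); (3) if q = q*, then û(q) = (u11·u22 − u12·u21)/δ. Moreover, for all q1, q2 ∈ [0,1]: if 0 ≤ q1 < q2 ≤ q*, then û(q1) > û(q2), and if q* ≤ q1 < q2 ≤ 1, then û(q1) < û(q2). -/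
/-- `û q` : the largest payoff Player 1 can secure against strategy `q` of Player 2. -/
noncomputable def uhat (u11 u12 u21 u22 q : ℝ) : ℝ :=
  sSup ((fun p => payoff u11 u12 u21 u22 p q) '' Set.Icc (0 : ℝ) 1)

theorem uhat_eq_max (u11 u12 u21 u22 q : ℝ) :
    uhat u11 u12 u21 u22 q = max (u11 * q + u12 * (1 - q)) (u21 * q + u22 * (1 - q)) := by
  unfold uhat
  apply IsGreatest.csSup_eq
  constructor
  · rcases le_total (u11 * q + u12 * (1 - q)) (u21 * q + u22 * (1 - q)) with h | h
    · rw [max_eq_right h]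
      exact ⟨0, by simp, by simp [payoff]⟩
    · rw [max_eq_left h]
      exact ⟨1, by simp, by simp [payoff]⟩
  · rintro _ ⟨p, ⟨hp0, hp1⟩, rfl⟩
    have ha := mul_le_mul_of_nonneg_left
      (le_max_left (u11 * q + u12 * (1 - q)) (u21 * q + u22 * (1 - q))) hp0
    have hb := mul_le_mul_of_nonneg_left
      (le_max_right (u11 * q + u12 * (1 - q)) (u21 * q + u22 * (1 - q))) (sub_nonneg.2 hp1)
    simp only [payoff]
    linarith

theorem stmt18 (u11 u12 u21 u22 δ qstar : ℝ)
    (h1 : (u11 - u12) * (u22 - u21) > 0)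
    (h2 : (u11 - u21) * (u22 - u12) > 0)
    (hδ : δ = u11 - u12 - u21 + u22)
    (hq : qstar = (u22 - u12) / δ) :
    (∀ q ∈ Set.Icc (0 : ℝ) 1,
      (((q < qstar ∧ 0 < δ) ∨ (qstar < q ∧ δ ≤ 0)) →
        uhat u11 u12 u21 u22 q = u21 * q + u22 * (1 - q)) ∧
      (((qstar < q ∧ 0 < δ) ∨ (q < qstar ∧ δ ≤ 0)) →
        uhat u11 u12 u21 u22 q = u11 * q + u12 * (1 - q)) ∧
      (q = qstar →
        uhat u11 u12 u21 u22 q = (u11 * u22 - u12 * u21) / δ)) ∧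
    (∀ q1 q2 : ℝ, 0 ≤ q1 → q1 < q2 → q2 ≤ qstar →
      uhat u11 u12 u21 u22 q2 < uhat u11 u12 u21 u22 q1) ∧
    (∀ q1 q2 : ℝ, qstar ≤ q1 → q1 < q2 → q2 ≤ 1 →
      uhat u11 u12 u21 u22 q1 < uhat u11 u12 u21 u22 q2) := by
  have hcase : (0 < δ ∧ u12 < u11 ∧ u21 < u22) ∨ (δ < 0 ∧ u11 < u12 ∧ u22 < u21) := by
    rcases mul_pos_iff.1 h1 with ⟨a, b⟩ | ⟨a, b⟩
    · left; refine ⟨?_, ?_, ?_⟩ <;> linarith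
    · right; refine ⟨?_, ?_, ?_⟩ <;> linarith
  have hne : δ ≠ 0 := by
    rcases hcase with h | h
    · exact h.1.ne'
    · exact h.1.ne
  have hqs : δ * qstar = u22 - u12 := by rw [hq]; field_simp
  have hdiff : ∀ q, (u11 * q + u12 * (1 - q)) - (u21 * q + u22 * (1 - q)) = δ * (q - qstar) := by
    intro q
    rw [mul_sub δ, hqs, hδ]; ring
  have hB : ∀ q, δ * (q - qstar) ≤ 0 →
      uhat u11 u12 u21 u22 q = u21 * q + u22 * (1 - q) := by
    intro q h
    rw [uhat_eq_max, max_eq_right]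
    linarith [hdiff q]
  have hA : ∀ q, 0 ≤ δ * (q - qstar) →
      uhat u11 u12 u21 u22 q = u11 * q + u12 * (1 - q) := by
    intro q h
    rw [uhat_eq_max, max_eq_left]
    linarith [hdiff q]
  refine ⟨fun q _ => ⟨?_, ?_, ?_⟩, ?_, ?_⟩
  · rintro (⟨a, b⟩ | ⟨a, b⟩) <;> apply hB <;> nlinarith
  · rintro (⟨a, b⟩ | ⟨a, b⟩) <;> apply hA <;> nlinarith
  · intro h
    rw [hA q (by simp [h]), h, eq_div_iff hne]
    have : (u11 * qstar + u12 * (1 - qstar)) * δ = (u11 - u12) * (δ * qstar) + u12 * δ := by ring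
    rw [this, hqs, hδ]; ring
  · intro q1 q2 _ h12 h2s
    rcases hcase with ⟨a, b, c⟩ | ⟨a, b, c⟩
    · rw [hB q1 (by nlinarith), hB q2 (by nlinarith)]; nlinarith
    · rw [hA q1 (by nlinarith), hA q2 (by nlinarith)]; nlinarith
  · intro q1 q2 h1s h12 _
    rcases hcase with ⟨a, b, c⟩ | ⟨a, b, c⟩
    · rw [hA q1 (by nlinarith), hA q2 (by nlinarith)]; nlinarith
    · rw [hB q1 (by nlinarith), hB q2 (by nlinarith)]; nlinarith
end

section
/- Consider a 2×2 zero-sum game with payoff matrix entries u11, u12, u21, u22. If (p*, q*) ∈ [0,1]×[0,1] is a Nash equilibrium of the game, then the minimum over q ∈ [0,1] of û(q) exists and equals u(p*, q*); that is, û(q*) = u(p*, q*) and û(q) ≥ u(p*, q*) for all q ∈ [0,1]. -/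
theorem stmt19 (u11 u12 u21 u22 p q : ℝ)
    (hNE : IsNE u11 u12 u21 u22 p q) :
    uhat u11 u12 u21 u22 q = payoff u11 u12 u21 u22 p q ∧
    ∀ q' ∈ Set.Icc (0 : ℝ) 1,
      payoff u11 u12 u21 u22 p q ≤ uhat u11 u12 u21 u22 q' := by
  obtain ⟨hp, hq, h1, h2⟩ := hNE
  constructor
  · apply IsGreatest.csSup_eq
    refine ⟨⟨p, hp, rfl⟩, ?_⟩
    rintro _ ⟨p', hp', rfl⟩
    exact h1 p' hp'
  · intro q' hq'
    refine (h2 q' hq').trans (le_csSup ?_ ⟨p, hp, rfl⟩)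
    apply (isCompact_Icc.image _).bddAbove
    unfold payoff
    fun_prop
end
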